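/- For ν ∈ [0,ν̄] let A_ν : ℝ → Matrix (Fin n) (Fin n) ℝ be RAP matrix functions and suppose: (H1') the system x' = A₀(t)x has an (α,K,P)-exponential dichotomy whose Green kernel has the RAP-integral property, and A_ν → A₀ uniformly on ℝ as ν → 0⁺; (H2)–(H4) as before: f : ℝ × ℝⁿ → ℝⁿ is RAP in t uniformly on compacts and Lipschitz in x on balls with constants M(r) < α/(2K); ξ is the unique RAP solution of z' = A₀(t)z + f(t,z); f is C² in x with second derivatives locally Lipschitz, t ↦ (∂f/∂x)(t,ξ(t)) RAP with sup norm δ < α/(4K²), and the Green kernel of the variational system u' = (A₀(t) + (∂f/∂x)(t,ξ(t)))u has the RAP-integral property; g_ν(t,x) := g(t,x,ν) is RAP in t uniformly for (x,ν) bounded, g₀ ≡ 0, Lipschitz in x on balls with constants M₁(r,ν) → 0 and sup norms ‖g_ν‖_r → 0 as ν → 0⁺. Then there exist r > 0 and ν₀ = ν₀(r) > 0 such that for all ν ∈ [0,ν₀] the system x' = A_ν(t)x + f(t,x) + g_ν(t,x) has exactly one RAP solution ψ_ν with sup_{t∈ℝ} ‖ψ_ν(t) − ξ(t)‖ ≤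 r; moreover, if g is uniformly continuous on ℝ × B[0,r̃] × [0,ν₀], then ψ_ν(t) → ξ(t) for every t ∈ ℝ as ν → 0⁺. -/

import Mathlib

open MeasureTheory Filter Metric

noncomputable def opNorm {n : ℕ} (A : Matrix (Fin n) (Fin n) ℝ) : ℝ :=
  ‖LinearMap.toContinuousLinearMap (Matrix.toEuclideanLin A)‖

noncomputable def mulVecE {n : ℕ} (A : Matrix (Fin n) (Fin n) ℝ)
    (v : EuclideanSpace ℝ (Fin n)) : EuclideanSpace ℝ (Fin n) :=
  Matrix.toEuclideanLin A v

noncomputable def clmToMatrix {n : ℕ}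
    (L : EuclideanSpace ℝ (Fin n) →L[ℝ] EuclideanSpace ℝ (Fin n)) :
    Matrix (Fin n) (Fin n) ℝ :=
  Matrix.toEuclideanLin.symm (L : EuclideanSpace ℝ (Fin n) →ₗ[ℝ] EuclideanSpace ℝ (Fin n))

def RelativelyDense (S : Set ℝ) : Prop :=
  ∃ l > 0, ∀ a : ℝ, ∃ τ ∈ S, τ ∈ Set.Icc a (a + l)

def RAP {E : Type*} [NormedAddCommGroup E] (f : ℝ → E) : Prop :=
  (∃ C, ∀ t, ‖f t‖ ≤ C) ∧ UniformContinuous f ∧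
  ∀ ε > 0, RelativelyDense
    {τ | Filter.limsup (fun t => ‖f (t + τ) - f t‖) (Filter.cocompact ℝ) < ε}

def RAPUniform {E F : Type*} [NormedAddCommGroup E] [NormedAddCommGroup F]
    (f : ℝ → E → F) (S : Set E) : Prop :=
  (∃ C, ∀ t, ∀ x ∈ S, ‖f t x‖ ≤ C) ∧
  UniformContinuousOn (fun p : ℝ × E => f p.1 p.2) (Set.univ ×ˢ S) ∧
  ∀ ε > 0, RelativelyDense
    {τ | Filter.limsup (fun t => ⨆ x ∈ S, ‖f (t + τ) x - f t x‖) (Filter.cocompact ℝ) < ε}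

def RAPMatrix {n : ℕ} (A : ℝ → Matrix (Fin n) (Fin n) ℝ) : Prop :=
  ∀ i j, RAP (fun t => A t i j)

def IsFundamentalMatrix {n : ℕ} (A Φ : ℝ → Matrix (Fin n) (Fin n) ℝ) : Prop :=
  Φ 0 = 1 ∧ (∀ t, IsUnit (Φ t)) ∧
  ∀ t i j, HasDerivAt (fun τ => Φ τ i j) ((A t * Φ t) i j) t

def ExpDichotomy {n : ℕ} (Φ : ℝ → Matrix (Fin n) (Fin n) ℝ)
    (α K : ℝ) (P : Matrix (Fin n) (Fin n) ℝ) : Prop :=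
  P * P = P ∧
  (∀ t s : ℝ, s ≤ t → opNorm (Φ t * P * (Φ s)⁻¹) ≤ K * Real.exp (-α * (t - s))) ∧
  (∀ t s : ℝ, t < s → opNorm (Φ t * (1 - P) * (Φ s)⁻¹) ≤ K * Real.exp (-α * (s - t)))

noncomputable def GreenKernel {n : ℕ} (Φ : ℝ → Matrix (Fin n) (Fin n) ℝ)
    (P : Matrix (Fin n) (Fin n) ℝ) (t s : ℝ) : Matrix (Fin n) (Fin n) ℝ :=
  if s ≤ t then Φ t * P * (Φ s)⁻¹ else -(Φ t * (1 - P) * (Φ s)⁻¹)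

def RAPIntegralProperty {n : ℕ} (G : ℝ → ℝ → Matrix (Fin n) (Fin n) ℝ) : Prop :=
  ∀ h : ℝ → EuclideanSpace ℝ (Fin n), RAP h →
    RAP (fun t => ∫ s : ℝ, mulVecE (G t s) (h s))

/-!
The Green operator `h ↦ ∫ s, G t s (h s)` of a dichotomy inverts `d/dt - A` on bounded functions,
has norm at most `2K/α` and, by assumption, preserves remote almost periodicity. RAP solutions of
`x' = A t x + N t x` are therefore the fixed points of `ψ ↦ ∫ s, G t s (N s (ψ s))`. On the tube of
RAP functions within distance `r` of `ξ`, which is complete, this map is a contraction as soon as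
`N` is a small perturbation of `f`, because `2K/α * Lip f < 1`. Moving `A ν - A 0` into the
perturbation reduces the matrix family to this case. For small `ν` this works with the given radius
and with any smaller one, so by uniqueness in the large tube its solution already lies in the small
tube: this is the convergence as `ν → 0⁺`.
-/

open scoped Topology NNReal BoundedContinuousFunction

section RelativelyDense

lemma RelativelyDense.mono {S T : Set ℝ} (hS : RelativelyDense S) (hST : S ⊆ T) :
    RelativelyDense T := by
  obtain ⟨l, hl, h⟩ := hS
  exact ⟨l, hl, fun a => (h a).imp fun τ hτ => ⟨hST hτ.1, hτ.2⟩⟩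

/-- The source of common remote almost periods of two functions. The offsets `τ - σ` of nearby
points `τ ∈ S`, `σ ∈ T` form a totally bounded set; subtracting one of finitely many reference pairs
with almost the same offset gives the claim. -/
lemma RelativelyDense.sub_near_sub {S T : Set ℝ} (hS : RelativelyDense S) (hT : RelativelyDense T)
    {d : ℝ} (hd : 0 < d) :
    RelativelyDense {ρ | ∃ τ ∈ S, ∃ τ' ∈ S, ∃ σ ∈ T, ∃ σ' ∈ T,
      ρ = τ - τ' ∧ |(τ - τ') - (σ - σ')| < d} := by
  obtain ⟨l₁, hl₁, h₁⟩ := hS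
  obtain ⟨l₂, hl₂, h₂⟩ := hT
  choose τ hτ hτI using h₁
  choose σ hσ hσI using h₂
  have hbounded : TotallyBounded (Set.range fun a => τ a - σ a) := by
    refine (isCompact_Icc (a := -l₂) (b := l₁)).totallyBounded.subset ?_
    rintro _ ⟨a, rfl⟩
    constructor <;> linarith [(hτI a).1, (hτI a).2, (hσI a).1, (hσI a).2]
  obtain ⟨t, ht, htfin, hcover⟩ := finite_approx_of_totallyBounded hbounded d hd
  have hpreimage : ∀ y ∈ t, ∃ c, τ c - σ c = y := fun y hy => ht hy
  choose! b hb using hpreimage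
  obtain ⟨B, hB⟩ := (htfin.image fun y => |τ (b y)|).bddAbove
  refine ⟨l₁ + 2 * |B|, by positivity, fun a => ?_⟩
  obtain ⟨y, hy, hclose⟩ := Set.mem_iUnion₂.1 (hcover ⟨a + |B|, rfl⟩)
  refine ⟨τ (a + |B|) - τ (b y),
    ⟨_, hτ (a + |B|), _, hτ (b y), _, hσ (a + |B|), _, hσ (b y), rfl, ?_⟩, ?_⟩
  · rw [mem_ball, Real.dist_eq, ← hb y hy] at hclose
    convert hclose using 2
    ring
  · have hτB := abs_le.1 ((hB ⟨y, hy, rfl⟩).trans (le_abs_self B))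
    constructor <;> linarith [(hτI (a + |B|)).1, (hτI (a + |B|)).2, hτB.1, hτB.2]

end RelativelyDense

section RemotePeriods

variable {E F : Type*} [NormedAddCommGroup E] [NormedAddCommGroup F]

/-- The remote `ε`-almost periods of `u`, with the condition `limsup < ε` in the definition of `RAP`
replaced by an eventual strict inequality. -/
def remotePeriods (u : ℝ → E) (ε : ℝ) : Set ℝ :=
  {τ | ∀ᶠ t in cocompact ℝ, ‖u (t + τ) - u t‖ < ε}

lemma tendsto_add_const_cocompact (c : ℝ) :
    Tendsto (fun t : ℝ => t + c) (cocompact ℝ) (cocompact ℝ) :=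
  (Homeomorph.addRight c).isClosedEmbedding.tendsto_cocompact

lemma remotePeriods_mono (u : ℝ → E) {ε ε' : ℝ} (h : ε ≤ ε') :
    remotePeriods u ε ⊆ remotePeriods u ε' :=
  fun _ hτ => hτ.mono fun _ ht => ht.trans_le h

lemma sub_mem_remotePeriods {u : ℝ → E} {ε ε' τ σ : ℝ} (hτ : τ ∈ remotePeriods u ε)
    (hσ : σ ∈ remotePeriods u ε') : τ - σ ∈ remotePeriods u (ε + ε') := by
  filter_upwards [(tendsto_add_const_cocompact (-σ)).eventually hτ,
    (tendsto_add_const_cocompact (-σ)).eventually hσ] with t hτt hσt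
  rw [show t + -σ + τ = t + (τ - σ) by ring] at hτt
  rw [neg_add_cancel_right, norm_sub_rev] at hσt
  exact (norm_sub_le_norm_sub_add_norm_sub _ _ _).trans_lt (add_lt_add hτt hσt)

lemma exists_near_mem_remotePeriods {u : ℝ → E} (hu : UniformContinuous u) {ε : ℝ} (hε : 0 < ε) :
    ∃ d > 0, ∀ ε', ∀ τ ∈ remotePeriods u ε', ∀ σ, |τ - σ| < d →
      σ ∈ remotePeriods u (ε + ε') := by
  obtain ⟨d, hd, hud⟩ := Metric.uniformContinuous_iff.1 hu ε hε
  refine ⟨d, hd, fun ε' τ hτ σ hσ => ?_⟩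
  filter_upwards [hτ] with t ht
  have hnear : ‖u (t + σ) - u (t + τ)‖ < ε := by
    rw [← dist_eq_norm]
    exact hud (by rwa [dist_add_left, dist_comm, Real.dist_eq])
  exact (norm_sub_le_norm_sub_add_norm_sub _ _ _).trans_lt (add_lt_add hnear ht)

lemma relativelyDense_remotePeriods_inter {u : ℝ → E} {v : ℝ → F} (hv : UniformContinuous v)
    (hud : ∀ ε > 0, RelativelyDense (remotePeriods u ε))
    (hvd : ∀ ε > 0, RelativelyDense (remotePeriods v ε)) {ε : ℝ} (hε : 0 < ε) :
    RelativelyDense (remotePeriods u ε ∩ remotePeriods v ε) := by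
  obtain ⟨d, hd, hnear⟩ := exists_near_mem_remotePeriods hv (half_pos hε)
  refine ((hud (ε / 4) (by positivity)).sub_near_sub (hvd (ε / 4) (by positivity)) hd).mono ?_
  rintro _ ⟨τ, hτ, τ', hτ', σ, hσ, σ', hσ', rfl, hclose⟩
  rw [abs_sub_comm] at hclose
  exact ⟨remotePeriods_mono u (by linarith) (sub_mem_remotePeriods hτ hτ'),
    remotePeriods_mono v (by linarith)
      (hnear _ _ (sub_mem_remotePeriods hσ hσ') _ hclose)⟩

end RemotePeriods

section RAP

variable {E F G : Type*} [NormedAddCommGroup E] [NormedAddCommGroup F] [NormedAddCommGroup G]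
  {u : ℝ → E} {v : ℝ → F} {h : ℝ → G}

lemma rap_iff : RAP u ↔ (∃ C, ∀ t, ‖u t‖ ≤ C) ∧ UniformContinuous u ∧
    ∀ ε > 0, RelativelyDense (remotePeriods u ε) := by
  refine and_congr_right fun ⟨C, hC⟩ => and_congr_right fun _ =>
    ⟨fun hd ε hε => (hd ε hε).mono fun τ hτ => ?_,
      fun hd ε hε => (hd (ε / 2) (half_pos hε)).mono fun τ hτ => ?_⟩
  · refine eventually_lt_of_limsup_lt hτ ?_
    exact isBoundedUnder_of ⟨C + C, fun t => (norm_sub_le _ _).trans (add_le_add (hC _) (hC t))⟩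
  · refine (limsup_le_of_le ?_ (hτ.mono fun t ht => ht.le)).trans_lt (half_lt_self hε)
    exact IsBoundedUnder.isCoboundedUnder_le ⟨0, by simp⟩

lemma RAP.uniformContinuous (hu : RAP u) : UniformContinuous u := hu.2.1

lemma RAP.exists_bound (hu : RAP u) : ∃ C, ∀ t, ‖u t‖ ≤ C := hu.1

lemma RAP.relativelyDense_remotePeriods (hu : RAP u) {ε : ℝ} (hε : 0 < ε) :
    RelativelyDense (remotePeriods u ε) := (rap_iff.1 hu).2.2 ε hε

lemma rap_const (c : E) : RAP fun _ : ℝ => c := by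
  refine rap_iff.2 ⟨⟨‖c‖, fun _ => le_rfl⟩, uniformContinuous_const, fun ε hε => ?_⟩
  exact ⟨1, one_pos, fun a => ⟨a, by simp [remotePeriods, hε], by simp⟩⟩

lemma RAP.of_forall_exists {C : ℝ} (hC : ∀ t, ‖h t‖ ≤ C)
    (hh : ∀ ε > 0, ∃ v : ℝ → F, RAP v ∧ ∃ d > 0, ∀ t s, ‖v t - v s‖ < d → ‖h t - h s‖ < ε) :
    RAP h := by
  refine rap_iff.2 ⟨⟨C, hC⟩, Metric.uniformContinuous_iff.2 fun ε hε => ?_, fun ε hε => ?_⟩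
  all_goals obtain ⟨v, hv, d, hd, hvd⟩ := hh ε hε
  · obtain ⟨d', hd', hvd'⟩ := Metric.uniformContinuous_iff.1 hv.uniformContinuous d hd
    simp only [dist_eq_norm] at hvd' ⊢
    exact ⟨d', hd', fun t s hts => hvd t s (hvd' hts)⟩
  · exact (hv.relativelyDense_remotePeriods hd).mono fun τ hτ => hτ.mono fun t ht => hvd _ _ ht

lemma RAP.of_norm_sub_le (hu : RAP u) (C : ℝ) (hC : ∀ t s, ‖h t - h s‖ ≤ C * ‖u t - u s‖) :
    RAP h := by
  obtain ⟨B, hB⟩ := hu.exists_bound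
  have hC' : ∀ t s, ‖h t - h s‖ ≤ (|C| + 1) * ‖u t - u s‖ := fun t s =>
    (hC t s).trans (by gcongr; linarith [le_abs_self C])
  refine RAP.of_forall_exists (C := ‖h 0‖ + (|C| + 1) * (B + B)) (fun t => ?_) fun ε hε =>
    ⟨u, hu, ε / (|C| + 1), by positivity, fun t s hts => (hC' t s).trans_lt ?_⟩
  · refine (norm_le_norm_add_norm_sub' _ (h 0)).trans ?_
    gcongr
    exact (hC' t 0).trans (by gcongr; exact (norm_sub_le _ _).trans (add_le_add (hB t) (hB 0)))
  · rwa [lt_div_iff₀' (by positivity)] at hts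

lemma RAP.prodMk (hu : RAP u) (hv : RAP v) : RAP fun t => (u t, v t) := by
  obtain ⟨B, hB⟩ := hu.exists_bound
  obtain ⟨C, hC⟩ := hv.exists_bound
  refine rap_iff.2 ⟨⟨max B C, fun t => max_le_max (hB t) (hC t)⟩,
    hu.uniformContinuous.prodMk hv.uniformContinuous, fun ε hε => ?_⟩
  refine (relativelyDense_remotePeriods_inter hv.uniformContinuous
    (fun _ => hu.relativelyDense_remotePeriods) (fun _ => hv.relativelyDense_remotePeriods)
    hε).mono ?_
  rintro τ ⟨hτu, hτv⟩
  filter_upwards [hτu, hτv] with t htu htv using max_lt htu htv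

lemma RAP.of_norm_sub_le_add (hu : RAP u) (hv : RAP v) (C : ℝ)
    (hC : ∀ t s, ‖h t - h s‖ ≤ C * (‖u t - u s‖ + ‖v t - v s‖)) : RAP h := by
  refine (hu.prodMk hv).of_norm_sub_le (|C| * 2) fun t s => (hC t s).trans ?_
  rw [mul_assoc, two_mul]
  gcongr
  exacts [le_abs_self C, le_max_left _ _, le_max_right _ _]

lemma RAP.add {u v : ℝ → E} (hu : RAP u) (hv : RAP v) : RAP fun t => u t + v t := by
  refine hu.of_norm_sub_le_add hv 1 fun t s => ?_
  rw [one_mul, add_sub_add_comm]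
  exact norm_add_le _ _

lemma RAP.sub {u v : ℝ → E} (hu : RAP u) (hv : RAP v) : RAP fun t => u t - v t := by
  refine hu.of_norm_sub_le_add hv 1 fun t s => ?_
  rw [one_mul, sub_sub_sub_comm]
  exact norm_sub_le _ _

lemma rap_sum {ι : Type*} (s : Finset ι) {u : ι → ℝ → E} (hu : ∀ i ∈ s, RAP (u i)) :
    RAP fun t => ∑ i ∈ s, u i t := by
  induction s using Finset.cons_induction with
  | empty => simpa using rap_const (0 : E)
  | cons i s hi ih =>
    simp only [Finset.sum_cons]
    exact (hu i (s.mem_cons_self i)).add (ih fun j hj => hu j (Finset.mem_cons_of_mem hj))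

lemma RAP.smul_const [NormedSpace ℝ E] {a : ℝ → ℝ} (ha : RAP a) (c : E) :
    RAP fun t => a t • c :=
  ha.of_norm_sub_le ‖c‖ fun t s => by rw [← sub_smul, norm_smul, mul_comm]

lemma RAP.clm_apply [NormedSpace ℝ E] [NormedSpace ℝ F] {L : ℝ → E →L[ℝ] F}
    (hL : RAP L) (hu : RAP u) : RAP fun t => L t (u t) := by
  obtain ⟨B, hB⟩ := hL.exists_bound
  obtain ⟨C, hC⟩ := hu.exists_bound
  refine hL.of_norm_sub_le_add hu (max C B) fun t s => ?_
  calc ‖L t (u t) - L s (u s)‖ = ‖(L t - L s) (u t) + L s (u t - u s)‖ := by simp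
    _ ≤ ‖L t - L s‖ * C + B * ‖u t - u s‖ := (norm_add_le _ _).trans <|
        add_le_add ((L t - L s).le_opNorm_of_le (hC t)) ((L s).le_of_opNorm_le (hB s) _)
    _ ≤ max C B * (‖L t - L s‖ + ‖u t - u s‖) := by
        rw [mul_add, mul_comm ‖L t - L s‖]
        gcongr
        exacts [le_max_left _ _, le_max_right _ _]

lemma isClosed_setOf_rap : IsClosed {u : ℝ →ᵇ E | RAP u} := by
  refine isClosed_of_closure_subset fun u hu => ?_
  refine RAP.of_forall_exists (F := E) u.norm_coe_le_norm fun ε hε => ?_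
  obtain ⟨v, hv, huv⟩ := Metric.mem_closure_iff.1 hu (ε / 3) (by positivity)
  refine ⟨v, hv, ε / 3, by positivity, fun t s hts => ?_⟩
  have hdist : ∀ t, dist (u t) (v t) < ε / 3 := fun t =>
    (BoundedContinuousFunction.dist_coe_le_dist t).trans_lt huv
  rw [← dist_eq_norm] at hts ⊢
  linarith [dist_triangle4_right (u t) (u s) (v t) (v s), hdist t, hdist s]

lemma RAPUniform.exists_rap_eval_eq {f : ℝ → E → F} {S : Set E} (hf : RAPUniform f S) :
    ∃ f' : ℝ → (S →ᵇ F), RAP f' ∧ ∀ t (x : S), f' t x = f t x := by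
  obtain ⟨⟨C, hC⟩, huc, hd⟩ := hf
  have hcont : ∀ t, Continuous fun x : S => f t x := fun t =>
    huc.continuousOn.comp_continuous (f := fun x : S => (t, (x : E))) (by fun_prop)
      fun x => ⟨trivial, x.2⟩
  let f' : ℝ → (S →ᵇ F) := fun t =>
    .ofNormedAddCommGroup (fun x : S => f t x) (hcont t) C fun x => hC t x x.2
  refine ⟨f', ⟨⟨max C 0, fun t => ?_⟩, Metric.uniformContinuous_iff.2 fun ε hε => ?_, ?_⟩,
    fun t x => rfl⟩
  · exact (BoundedContinuousFunction.norm_le (le_max_right _ _)).2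
      fun x => (hC t x x.2).trans (le_max_left _ _)
  · obtain ⟨d, hd, hfd⟩ := Metric.uniformContinuousOn_iff.1 huc (ε / 2) (half_pos hε)
    refine ⟨d, hd, fun {t s} hts => lt_of_le_of_lt ?_ (half_lt_self hε)⟩
    refine (BoundedContinuousFunction.dist_le (half_pos hε).le).2 fun x => ?_
    exact (hfd (t, x) ⟨trivial, x.2⟩ (s, x) ⟨trivial, x.2⟩
      (by rwa [dist_prod_same_right])).le
  · have hsup : ∀ t s, ⨆ x ∈ S, ‖f t x - f s x‖ = ‖f' t - f' s‖ := fun t s => by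
      rw [BoundedContinuousFunction.norm_eq_iSup_norm]
      refine (ciSup_subtype (f := fun x => ‖f t x.1 - f s x.1‖) ?_ ?_).symm
      · exact (f' t - f' s).bddAbove_range_norm_comp
      · simpa using Real.iSup_nonneg fun x : S => norm_nonneg (f t x - f s x)
    simpa only [hsup] using hd

lemma RAPUniform.comp {f : ℝ → E → F} {S : Set E} (hf : RAPUniform f S) (hu : RAP u)
    (huS : ∀ t, u t ∈ S) : RAP fun t => f t (u t) := by
  obtain ⟨f', hf', hff'⟩ := hf.exists_rap_eval_eq
  obtain ⟨⟨C, hC⟩, huc, -⟩ := hf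
  refine RAP.of_forall_exists (F := (S →ᵇ F) × E) (fun t => hC t _ (huS t)) fun ε hε => ?_
  obtain ⟨d, hd, hfd⟩ := Metric.uniformContinuousOn_iff.1 huc (ε / 2) (half_pos hε)
  refine ⟨_, hf'.prodMk hu, min (ε / 2) d, by positivity, fun t s hts => ?_⟩
  obtain ⟨htime, hspace⟩ := max_lt_iff.1 hts
  have htime' : ‖f t (u t) - f s (u t)‖ < ε / 2 := by
    rw [← hff' t ⟨u t, huS t⟩, ← hff' s ⟨u t, huS t⟩]
    exact ((f' t - f' s).norm_coe_le_norm _).trans_lt (htime.trans_le (min_le_left _ _))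
  have hspace' : ‖f s (u t) - f s (u s)‖ < ε / 2 := by
    rw [← dist_eq_norm]
    refine hfd (s, u t) ⟨trivial, huS t⟩ (s, u s) ⟨trivial, huS s⟩ ?_
    rw [dist_prod_same_left, dist_eq_norm]
    exact hspace.trans_le (min_le_right _ _)
  linarith [norm_sub_le_norm_sub_add_norm_sub (f t (u t)) (f s (u t)) (f s (u s))]

end RAP

section Calculus

lemma hasDerivAt_units_inv {𝕜 R : Type*} [NontriviallyNormedField 𝕜] [NormedRing R]
    [HasSummableGeomSeries R] [NormedAlgebra 𝕜 R] {u : 𝕜 → Rˣ} {u' : R} {t : 𝕜}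
    (hu : HasDerivAt (fun s => (u s : R)) u' t) :
    HasDerivAt (fun s => (↑(u s)⁻¹ : R)) (-(↑(u t)⁻¹ * u' * ↑(u t)⁻¹)) t := by
  have h := (hasFDerivAt_ringInverse (𝕜 := 𝕜) (u t)).comp_hasDerivAt t hu
  simpa [Function.comp_def] using h

variable {E : Type*} [NormedAddCommGroup E] [NormedSpace ℝ E] [CompleteSpace E] {w : ℝ → E}

lemma hasDerivAt_setIntegral_Iic (hw : Continuous w) (hint : ∀ t, IntegrableOn w (Set.Iic t))
    (t : ℝ) : HasDerivAt (fun t => ∫ s in Set.Iic t, w s) (w t) t := by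
  have hsplit : (fun t => ∫ s in Set.Iic t, w s) =
      fun t => (∫ s in (0 : ℝ)..t, w s) + ∫ s in Set.Iic 0, w s := by
    funext t
    rw [← intervalIntegral.integral_Iic_sub_Iic (hint 0) (hint t), sub_add_cancel]
  rw [hsplit]
  exact (hw.integral_hasStrictDerivAt 0 t).hasDerivAt.add_const _

lemma hasDerivAt_setIntegral_Ioi (hw : Continuous w) (hint : ∀ t, IntegrableOn w (Set.Ioi t))
    (t : ℝ) : HasDerivAt (fun t => ∫ s in Set.Ioi t, w s) (-w t) t := by
  have hsplit : (fun t => ∫ s in Set.Ioi t, w s) =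
      fun t => (∫ s in Set.Ioi 0, w s) - ∫ s in (0 : ℝ)..t, w s := by
    funext t
    rw [← intervalIntegral.integral_Ioi_sub_Ioi' (hint 0) (hint t), sub_sub_cancel]
  rw [hsplit]
  exact (hw.integral_hasStrictDerivAt 0 t).hasDerivAt.const_sub _

lemma integral_exp_neg_mul_abs {α : ℝ} (hα : 0 < α) : ∫ s : ℝ, Real.exp (-α * |s|) = 2 / α := by
  rw [integral_comp_abs (f := fun s => Real.exp (-α * s)), integral_exp_mul_Ioi (neg_lt_zero.2 hα)]
  simp [div_eq_mul_inv]

lemma integrable_exp_neg_mul_abs {α : ℝ} (hα : 0 < α) :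
    Integrable fun s : ℝ => Real.exp (-α * |s|) :=
  .of_integral_ne_zero (by rw [integral_exp_neg_mul_abs hα]; positivity)

end Calculus

section Dichotomy

variable {E : Type*} [NormedAddCommGroup E] [NormedSpace ℝ E]

/-- An exponential dichotomy of `x' = A t x` on a Banach space, with fundamental solution `Φ`. The
normalisation `Φ 0 = 1` is dropped: passing to `Φ t * (Φ 0)⁻¹` and `Φ 0 * P * (Φ 0)⁻¹` changes
neither the bounds nor the Green operator. -/
structure HasExpDichotomy (A : ℝ → E →L[ℝ] E) (Φ : ℝ → (E →L[ℝ] E)ˣ) (P : E →L[ℝ] E)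
    (α K : ℝ) : Prop where
  rate_pos : 0 < α
  isIdempotentElem : IsIdempotentElem P
  hasDerivAt (t : ℝ) : HasDerivAt (fun t => (Φ t : E →L[ℝ] E)) (A t * Φ t) t
  norm_stable_le {t s : ℝ} (h : s ≤ t) :
    ‖(Φ t * P * ↑(Φ s)⁻¹ : E →L[ℝ] E)‖ ≤ K * Real.exp (-α * (t - s))
  norm_unstable_le {t s : ℝ} (h : t < s) :
    ‖(Φ t * (1 - P) * ↑(Φ s)⁻¹ : E →L[ℝ] E)‖ ≤ K * Real.exp (-α * (s - t))

/-- The Green kernel of a dichotomy as an operator-valued function; `GreenKernel` is its matrix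
version. -/
noncomputable def greenOperator (Φ : ℝ → (E →L[ℝ] E)ˣ) (P : E →L[ℝ] E) (t s : ℝ) : E →L[ℝ] E :=
  if s ≤ t then Φ t * P * ↑(Φ s)⁻¹ else -(Φ t * (1 - P) * ↑(Φ s)⁻¹)

/-- The RAP-integral property of an operator-valued kernel; `RAPIntegralProperty` is its matrix
version. -/
def HasRAPIntegral (G : ℝ → ℝ → E →L[ℝ] E) : Prop :=
  ∀ h : ℝ → E, RAP h → RAP fun t => ∫ s, G t s (h s)

variable {A : ℝ → E →L[ℝ] E} {Φ : ℝ → (E →L[ℝ] E)ˣ} {P : E →L[ℝ] E} {α K C : ℝ} {y h : ℝ → E}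

lemma units_inv_apply_self (u : (E →L[ℝ] E)ˣ) (x : E) : (↑u⁻¹ : E →L[ℝ] E) (u.val x) = x :=
  DFunLike.congr_fun u.inv_mul x

lemma units_apply_inv_self (u : (E →L[ℝ] E)ˣ) (x : E) : u.val ((↑u⁻¹ : E →L[ℝ] E) x) = x :=
  DFunLike.congr_fun u.mul_inv x

lemma greenOperator_apply_of_le {t s : ℝ} (hst : s ≤ t) (x : E) :
    greenOperator Φ P t s x = (Φ t).val (P ((↑(Φ s)⁻¹ : E →L[ℝ] E) x)) := by
  rw [greenOperator, if_pos hst]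
  rfl

lemma greenOperator_apply_of_lt {t s : ℝ} (hts : t < s) (x : E) :
    greenOperator Φ P t s x = -(Φ t).val ((1 - P) ((↑(Φ s)⁻¹ : E →L[ℝ] E) x)) := by
  rw [greenOperator, if_neg hts.not_ge]
  rfl

namespace HasExpDichotomy

lemma norm_greenOperator_le (hD : HasExpDichotomy A Φ P α K) (t s : ℝ) :
    ‖greenOperator Φ P t s‖ ≤ K * Real.exp (-α * |s - t|) := by
  unfold greenOperator
  split_ifs with hst
  · rw [abs_of_nonpos (sub_nonpos.2 hst), neg_sub]
    exact hD.norm_stable_le hst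
  · rw [norm_neg, abs_of_pos (sub_pos.2 (not_le.1 hst))]
    exact hD.norm_unstable_le (not_le.1 hst)

lemma const_nonneg (hD : HasExpDichotomy A Φ P α K) : 0 ≤ K := by
  simpa using (norm_nonneg _).trans (hD.norm_greenOperator_le 0 0)

lemma norm_greenOperator_apply_le (hD : HasExpDichotomy A Φ P α K) (hC : ∀ t, ‖h t‖ ≤ C)
    (t s : ℝ) : ‖greenOperator Φ P t s (h s)‖ ≤ K * Real.exp (-α * |s - t|) * C :=
  (greenOperator Φ P t s).le_of_opNorm_le_of_le (hD.norm_greenOperator_le t s) (hC s)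

lemma integrable_bound (hD : HasExpDichotomy A Φ P α K) (C t : ℝ) :
    Integrable fun s : ℝ => K * Real.exp (-α * |s - t|) * C :=
  (((integrable_exp_neg_mul_abs hD.rate_pos).comp_sub_right t).const_mul K).mul_const C

lemma norm_integral_le (hD : HasExpDichotomy A Φ P α K) (hC : ∀ t, ‖h t‖ ≤ C) (t : ℝ) :
    ‖∫ s, greenOperator Φ P t s (h s)‖ ≤ 2 * K / α * C := by
  calc ‖∫ s, greenOperator Φ P t s (h s)‖ ≤ ∫ s, K * Real.exp (-α * |s - t|) * C :=
        norm_integral_le_of_norm_le (hD.integrable_bound C t)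
          (.of_forall (hD.norm_greenOperator_apply_le hC t))
    _ = 2 * K / α * C := by
        rw [integral_mul_const, integral_const_mul,
          integral_sub_right_eq_self (fun s => Real.exp (-α * |s|)) t,
          integral_exp_neg_mul_abs hD.rate_pos]
        ring

variable [CompleteSpace E]

lemma hasDerivAt_inv (hD : HasExpDichotomy A Φ P α K) (t : ℝ) :
    HasDerivAt (fun t => (↑(Φ t)⁻¹ : E →L[ℝ] E)) (-(↑(Φ t)⁻¹ * A t)) t := by
  simpa only [mul_assoc, Units.mul_inv, mul_one] using hasDerivAt_units_inv (hD.hasDerivAt t)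

lemma continuous_inv_apply (hD : HasExpDichotomy A Φ P α K) (hh : Continuous h) :
    Continuous fun s => (↑(Φ s)⁻¹ : E →L[ℝ] E) (h s) :=
  (continuous_iff_continuousAt.2 fun t => (hD.hasDerivAt_inv t).continuousAt).clm_apply hh

lemma inv_apply_eq_of_hasDerivAt (hD : HasExpDichotomy A Φ P α K)
    (hy : ∀ t, HasDerivAt y (A t (y t)) t) (t s : ℝ) :
    (↑(Φ t)⁻¹ : E →L[ℝ] E) (y t) = (↑(Φ s)⁻¹ : E →L[ℝ] E) (y s) := by
  have hderiv : ∀ t, HasDerivAt (fun t => (↑(Φ t)⁻¹ : E →L[ℝ] E) (y t)) 0 t := fun t =>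
    ((hD.hasDerivAt_inv t).clm_apply (hy t)).congr_deriv (by simp)
  exact is_const_of_deriv_eq_zero (fun t => (hderiv t).differentiableAt)
    (fun t => (hderiv t).deriv) t s

lemma eq_zero_of_hasDerivAt (hD : HasExpDichotomy A Φ P α K) (hC : ∀ t, ‖y t‖ ≤ C)
    (hy : ∀ t, HasDerivAt y (A t (y t)) t) (t : ℝ) : y t = 0 := by
  have hsplit : ∀ τ > 0, y t =
      greenOperator Φ P t (t - τ) (y (t - τ)) - greenOperator Φ P t (t + τ) (y (t + τ)) := by
    intro τ hτ
    rw [greenOperator_apply_of_le (by linarith), greenOperator_apply_of_lt (by linarith),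
      hD.inv_apply_eq_of_hasDerivAt hy (t - τ) t, hD.inv_apply_eq_of_hasDerivAt hy (t + τ) t,
      sub_neg_eq_add, ← map_add, ← add_apply, add_sub_cancel, one_apply_eq_self,
      units_apply_inv_self]
  have hlim : Tendsto (fun τ : ℝ => 2 * (K * Real.exp (-α * τ) * C)) atTop (𝓝 0) := by
    have hexp := Real.tendsto_exp_atBot.comp
      (tendsto_id.const_mul_atTop_of_neg (neg_lt_zero.2 hD.rate_pos))
    simpa using ((hexp.const_mul K).mul_const C).const_mul 2
  refine norm_le_zero_iff.1 (ge_of_tendsto hlim ?_)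
  filter_upwards [eventually_gt_atTop 0] with τ hτ
  have hpast := hD.norm_greenOperator_apply_le hC t (t - τ)
  have hfuture := hD.norm_greenOperator_apply_le hC t (t + τ)
  rw [sub_sub_cancel_left, abs_neg, abs_of_pos hτ] at hpast
  rw [add_sub_cancel_left, abs_of_pos hτ] at hfuture
  rw [hsplit τ hτ, two_mul]
  exact (norm_sub_le _ _).trans (add_le_add hpast hfuture)

lemma integrable_greenOperator_apply (hD : HasExpDichotomy A Φ P α K) (hC : ∀ t, ‖h t‖ ≤ C)
    (hh : Continuous h) (t : ℝ) : Integrable fun s => greenOperator Φ P t s (h s) := by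
  refine (hD.integrable_bound C t).mono' ?_ (.of_forall (hD.norm_greenOperator_apply_le hC t))
  have hcont := hD.continuous_inv_apply hh
  have hite : (fun s => greenOperator Φ P t s (h s)) = fun s =>
      if s ∈ Set.Iic t then (Φ t).val (P ((↑(Φ s)⁻¹ : E →L[ℝ] E) (h s)))
      else -(Φ t).val ((1 - P) ((↑(Φ s)⁻¹ : E →L[ℝ] E) (h s))) := by
    funext s
    split_ifs with hst
    exacts [greenOperator_apply_of_le hst _, greenOperator_apply_of_lt (not_le.1 hst) _]
  rw [hite]
  exact (StronglyMeasurable.ite measurableSet_Iic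
    ((Φ t).val.continuous.comp (P.continuous.comp hcont)).stronglyMeasurable
    ((Φ t).val.continuous.comp ((1 - P).continuous.comp hcont)).neg.stronglyMeasurable
    ).aestronglyMeasurable

lemma integrableOn_Iic (hD : HasExpDichotomy A Φ P α K) (hC : ∀ t, ‖h t‖ ≤ C)
    (hh : Continuous h) (t : ℝ) :
    IntegrableOn (fun s => P ((↑(Φ s)⁻¹ : E →L[ℝ] E) (h s))) (Set.Iic t) := by
  refine IntegrableOn.congr_fun ((↑(Φ t)⁻¹ : E →L[ℝ] E).integrable_comp
    (hD.integrable_greenOperator_apply hC hh t).integrableOn) (fun s hs => ?_) measurableSet_Iic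
  simp only [greenOperator_apply_of_le (Set.mem_Iic.1 hs), units_inv_apply_self]

lemma integrableOn_Ioi (hD : HasExpDichotomy A Φ P α K) (hC : ∀ t, ‖h t‖ ≤ C)
    (hh : Continuous h) (t : ℝ) :
    IntegrableOn (fun s => (1 - P) ((↑(Φ s)⁻¹ : E →L[ℝ] E) (h s))) (Set.Ioi t) := by
  refine IntegrableOn.congr_fun ((↑(Φ t)⁻¹ : E →L[ℝ] E).integrable_comp
    (hD.integrable_greenOperator_apply hC hh t).integrableOn).neg (fun s hs => ?_)
    measurableSet_Ioi
  simp only [Pi.neg_apply, greenOperator_apply_of_lt (Set.mem_Ioi.1 hs), map_neg, neg_neg,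
    units_inv_apply_self]

lemma integral_greenOperator_apply (hD : HasExpDichotomy A Φ P α K) (hC : ∀ t, ‖h t‖ ≤ C)
    (hh : Continuous h) (t : ℝ) : ∫ s, greenOperator Φ P t s (h s) =
      (Φ t).val ((∫ s in Set.Iic t, P ((↑(Φ s)⁻¹ : E →L[ℝ] E) (h s))) -
        ∫ s in Set.Ioi t, (1 - P) ((↑(Φ s)⁻¹ : E →L[ℝ] E) (h s))) := by
  have hint := hD.integrable_greenOperator_apply hC hh t
  rw [← intervalIntegral.integral_Iic_add_Ioi hint.integrableOn hint.integrableOn,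
    setIntegral_congr_fun measurableSet_Iic fun s hs => greenOperator_apply_of_le hs (h s),
    setIntegral_congr_fun measurableSet_Ioi fun s hs => greenOperator_apply_of_lt hs (h s),
    integral_neg, ← sub_eq_add_neg, map_sub,
    (Φ t).val.integral_comp_comm (hD.integrableOn_Iic hC hh t),
    (Φ t).val.integral_comp_comm (hD.integrableOn_Ioi hC hh t)]

lemma hasDerivAt_integral (hD : HasExpDichotomy A Φ P α K) (hC : ∀ t, ‖h t‖ ≤ C)
    (hh : Continuous h) (t : ℝ) : HasDerivAt (fun t => ∫ s, greenOperator Φ P t s (h s))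
      (A t (∫ s, greenOperator Φ P t s (h s)) + h t) t := by
  simp only [hD.integral_greenOperator_apply hC hh]
  have hcont := hD.continuous_inv_apply hh
  refine ((hD.hasDerivAt t).clm_apply
    ((hasDerivAt_setIntegral_Iic (P.continuous.comp hcont) (hD.integrableOn_Iic hC hh) t).sub
      (hasDerivAt_setIntegral_Ioi ((1 - P).continuous.comp hcont)
        (hD.integrableOn_Ioi hC hh) t))).congr_deriv ?_
  congr 1
  simp [units_apply_inv_self]

lemma eq_integral_of_hasDerivAt (hD : HasExpDichotomy A Φ P α K) (hC : ∀ t, ‖h t‖ ≤ C)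
    (hh : Continuous h) {B : ℝ} (hB : ∀ t, ‖y t‖ ≤ B)
    (hy : ∀ t, HasDerivAt y (A t (y t) + h t) t) (t : ℝ) :
    y t = ∫ s, greenOperator Φ P t s (h s) := by
  refine sub_eq_zero.1 (hD.eq_zero_of_hasDerivAt
    (y := fun t => y t - ∫ s, greenOperator Φ P t s (h s)) (fun t => (norm_sub_le _ _).trans
      (add_le_add (hB t) (hD.norm_integral_le hC t))) (fun t => ?_) t)
  refine ((hy t).sub (hD.hasDerivAt_integral hC hh t)).congr_deriv ?_
  rw [map_sub]
  abel

lemma norm_sub_le_of_hasDerivAt (hD : HasExpDichotomy A Φ P α K) {x k : ℝ → E} (hx : RAP x)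
    (hy : RAP y) (hh : RAP h) (hk : RAP k) (hx' : ∀ t, HasDerivAt x (A t (x t) + h t) t)
    (hy' : ∀ t, HasDerivAt y (A t (y t) + k t) t) (hC : ∀ t, ‖h t - k t‖ ≤ C) (t : ℝ) :
    ‖x t - y t‖ ≤ 2 * K / α * C := by
  obtain ⟨B, hB⟩ := (hx.sub hy).exists_bound
  have hsub : ∀ t, HasDerivAt (fun t => x t - y t) (A t (x t - y t) + (h t - k t)) t := fun t =>
    ((hx' t).sub (hy' t)).congr_deriv (by rw [map_sub]; abel)
  rw [hD.eq_integral_of_hasDerivAt hC (hh.sub hk).uniformContinuous.continuous hB hsub]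
  exact hD.norm_integral_le hC t

end HasExpDichotomy

end Dichotomy

section Contraction

lemma existsUnique_mem_fixedPoint {X β : Type*} [TopologicalSpace X] [MetricSpace β]
    [CompleteSpace β] {S : Set (X → β)} (hcont : ∀ ψ ∈ S, Continuous ψ)
    (hbdd : ∀ ψ ∈ S, ∃ C, ∀ t s, dist (ψ t) (ψ s) ≤ C)
    (hclosed : IsClosed {ψ : X →ᵇ β | ⇑ψ ∈ S}) (hne : S.Nonempty) {T : (X → β) → X → β}
    (hT : Set.MapsTo T S S) {θ : ℝ≥0} (hθ : θ < 1)
    (hdist : ∀ ψ ∈ S, ∀ φ ∈ S, ∀ C, (∀ t, dist (ψ t) (φ t) ≤ C) →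
      ∀ t, dist (T ψ t) (T φ t) ≤ θ * C) :
    ∃! ψ, ψ ∈ S ∧ T ψ = ψ := by
  have hlift : ∀ ψ ∈ S, ∃ φ : {φ : X →ᵇ β | ⇑φ ∈ S}, ⇑φ.1 = ψ := fun ψ hψ =>
    ⟨⟨⟨⟨ψ, hcont ψ hψ⟩, hbdd ψ hψ⟩, hψ⟩, rfl⟩
  choose T' hT' using fun ψ : {ψ : X →ᵇ β | ⇑ψ ∈ S} => hlift _ (hT ψ.2)
  have hcontr : ContractingWith θ T' := by
    refine ⟨hθ, LipschitzWith.of_dist_le_mul fun ψ φ => ?_⟩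
    refine (BoundedContinuousFunction.dist_le (by positivity)).2 fun t => ?_
    rw [hT', hT']
    exact hdist _ ψ.2 _ φ.2 _ (BoundedContinuousFunction.dist_coe_le_dist (f := ψ.1)) t
  have : CompleteSpace {ψ : X →ᵇ β | ⇑ψ ∈ S} := hclosed.completeSpace_coe
  obtain ⟨ψ₀, hψ₀⟩ := hne
  have : Nonempty {ψ : X →ᵇ β | ⇑ψ ∈ S} := ⟨(hlift ψ₀ hψ₀).choose⟩
  have hfix := hcontr.fixedPoint_isFixedPt
  refine ⟨hcontr.fixedPoint.1, ⟨hcontr.fixedPoint.2, ?_⟩, ?_⟩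
  · rw [← hT', hfix]
  · rintro φ ⟨hφ, hTφ⟩
    obtain ⟨φ', rfl⟩ := hlift φ hφ
    have hfix' : T' φ' = φ' := Subtype.ext (DFunLike.coe_injective ((hT' φ').trans hTφ))
    rw [hcontr.fixedPoint_unique hfix']

end Contraction

section Semilinear

variable {E : Type*} [NormedAddCommGroup E] {ξ ψ : ℝ → E} {r : ℝ}

/-- The RAP functions within uniform distance `r` of `ξ`. -/
def rapTube (ξ : ℝ → E) (r : ℝ) : Set (ℝ → E) :=
  {ψ | RAP ψ ∧ ∀ t, ‖ψ t - ξ t‖ ≤ r}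

/-- The superposition operator of `N` preserves remote almost periodicity. -/
def PreservesRAP (N : ℝ → E → E) : Prop :=
  ∀ ψ : ℝ → E, RAP ψ → RAP fun t => N t (ψ t)

lemma PreservesRAP.add {N N' : ℝ → E → E} (hN : PreservesRAP N) (hN' : PreservesRAP N') :
    PreservesRAP fun t x => N t x + N' t x :=
  fun ψ hψ => (hN ψ hψ).add (hN' ψ hψ)

lemma preservesRAP_of_rapUniform {f : ℝ → E → E} (hf : ∀ R, RAPUniform f (closedBall 0 R)) :
    PreservesRAP f := fun ψ hψ => by
  obtain ⟨R, hR⟩ := hψ.exists_bound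
  exact (hf R).comp hψ fun t => mem_closedBall_zero_iff.2 (hR t)

lemma isClosed_setOf_mem_rapTube : IsClosed {ψ : ℝ →ᵇ E | ⇑ψ ∈ rapTube ξ r} := by
  have hdist : IsClosed {ψ : ℝ →ᵇ E | ∀ t, ‖ψ t - ξ t‖ ≤ r} := by
    rw [Set.ofPred_forall]
    exact isClosed_iInter fun t => isClosed_le (by fun_prop) continuous_const
  exact isClosed_setOf_rap.inter hdist

variable [NormedSpace ℝ E]

/-- `ψ` is a RAP solution of `x' = F t x` within uniform distance `r` of `ξ`. -/
def IsRAPSolutionNear (F : ℝ → E → E) (ξ : ℝ → E) (r : ℝ) (ψ : ℝ → E) : Prop :=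
  RAP ψ ∧ (∀ t, HasDerivAt ψ (F t (ψ t)) t) ∧ ∀ t, ‖ψ t - ξ t‖ ≤ r

lemma IsRAPSolutionNear.mono {F : ℝ → E → E} {r' : ℝ} (hψ : IsRAPSolutionNear F ξ r ψ)
    (hr : r ≤ r') : IsRAPSolutionNear F ξ r' ψ :=
  ⟨hψ.1, hψ.2.1, fun t => (hψ.2.2 t).trans hr⟩

lemma tendstoUniformly_of_existsUnique {ι : Type*} {l : Filter ι} {F : ι → ℝ → E → E}
    {ψ : ι → ℝ → E} (hr : 0 < r)
    (hex : ∀ ρ > 0, ∀ᶠ i in l, ∃! φ, IsRAPSolutionNear (F i) ξ ρ φ)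
    (hψ : ∀ᶠ i in l, IsRAPSolutionNear (F i) ξ r (ψ i)) : TendstoUniformly ψ ξ l := by
  refine Metric.tendstoUniformly_iff.2 fun ε hε => ?_
  filter_upwards [hψ, hex r hr, hex (min r (ε / 2)) (by positivity)]
    with i hψi huniq ⟨φ, hφ, _⟩ t
  rw [huniq.unique hψi (hφ.mono (min_le_left _ _)), dist_comm, dist_eq_norm]
  exact (hφ.2.2 t).trans_lt ((min_le_right _ _).trans_lt (half_lt_self hε))

namespace HasExpDichotomy

variable [CompleteSpace E] {A : ℝ → E →L[ℝ] E} {Φ : ℝ → (E →L[ℝ] E)ˣ} {P : E →L[ℝ] E}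
  {α K : ℝ} {N : ℝ → E → E} {q : ℝ≥0}

lemma hasDerivAt_integral_of_preservesRAP (hD : HasExpDichotomy A Φ P α K)
    (hN : PreservesRAP N) (hψ : RAP ψ) (t : ℝ) :
    HasDerivAt (fun t => ∫ s, greenOperator Φ P t s (N s (ψ s)))
      (A t (∫ s, greenOperator Φ P t s (N s (ψ s))) + N t (ψ t)) t := by
  obtain ⟨C, hC⟩ := (hN ψ hψ).exists_bound
  exact hD.hasDerivAt_integral hC (hN ψ hψ).uniformContinuous.continuous t

lemma isRAPSolutionNear_iff (hD : HasExpDichotomy A Φ P α K) (hN : PreservesRAP N) :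
    IsRAPSolutionNear (fun t x => A t x + N t x) ξ r ψ ↔
      ψ ∈ rapTube ξ r ∧ (fun t => ∫ s, greenOperator Φ P t s (N s (ψ s))) = ψ := by
  constructor
  · rintro ⟨hψ, hψ', hψr⟩
    obtain ⟨B, hB⟩ := hψ.exists_bound
    obtain ⟨C, hC⟩ := (hN ψ hψ).exists_bound
    exact ⟨⟨hψ, hψr⟩, funext fun t => (hD.eq_integral_of_hasDerivAt hC
      (hN ψ hψ).uniformContinuous.continuous hB hψ' t).symm⟩
  · rintro ⟨⟨hψ, hψr⟩, hfix⟩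
    refine ⟨hψ, fun t => ?_, hψr⟩
    simpa only [congrFun hfix t, hfix] using hD.hasDerivAt_integral_of_preservesRAP hN hψ t

lemma mapsTo_rapTube (hD : HasExpDichotomy A Φ P α K) (hG : HasRAPIntegral (greenOperator Φ P))
    {b : ℝ → E} (hb : RAP b) (hξ : RAP ξ) (hξ' : ∀ t, HasDerivAt ξ (A t (ξ t) + b t) t)
    (hN : PreservesRAP N) (hlip : ∀ t, LipschitzOnWith q (N t) (closedBall (ξ t) r)) (hr : 0 ≤ r)
    {e : ℝ} (he : ∀ t, ‖N t (ξ t) - b t‖ ≤ e) (hqe : 2 * K / α * (q * r + e) ≤ r) :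
    Set.MapsTo (fun ψ t => ∫ s, greenOperator Φ P t s (N s (ψ s))) (rapTube ξ r)
      (rapTube ξ r) := by
  rintro ψ ⟨hψ, hψr⟩
  have hdefect : ∀ t, ‖N t (ψ t) - b t‖ ≤ q * r + e := fun t =>
    calc ‖N t (ψ t) - b t‖ ≤ ‖N t (ψ t) - N t (ξ t)‖ + ‖N t (ξ t) - b t‖ :=
          norm_sub_le_norm_sub_add_norm_sub _ _ _
      _ ≤ q * ‖ψ t - ξ t‖ + e := add_le_add ((hlip t).norm_sub_le
          (mem_closedBall_iff_norm.2 (hψr t)) (mem_closedBall_self hr)) (he t)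
      _ ≤ q * r + e := by gcongr; exact hψr t
  exact ⟨hG _ (hN ψ hψ), fun t => (hD.norm_sub_le_of_hasDerivAt (hG _ (hN ψ hψ)) hξ (hN ψ hψ) hb
    (hD.hasDerivAt_integral_of_preservesRAP hN hψ) hξ' hdefect t).trans hqe⟩

lemma dist_integral_le (hD : HasExpDichotomy A Φ P α K)
    (hG : HasRAPIntegral (greenOperator Φ P)) (hN : PreservesRAP N)
    (hlip : ∀ t, LipschitzOnWith q (N t) (closedBall (ξ t) r)) {φ : ℝ → E}
    (hψ : ψ ∈ rapTube ξ r) (hφ : φ ∈ rapTube ξ r) {C : ℝ} (hC : ∀ t, dist (ψ t) (φ t) ≤ C)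
    (t : ℝ) : dist (∫ s, greenOperator Φ P t s (N s (ψ s)))
      (∫ s, greenOperator Φ P t s (N s (φ s))) ≤ 2 * K / α * q * C := by
  rw [dist_eq_norm, mul_assoc]
  refine hD.norm_sub_le_of_hasDerivAt (hG _ (hN ψ hψ.1)) (hG _ (hN φ hφ.1)) (hN ψ hψ.1)
    (hN φ hφ.1) (hD.hasDerivAt_integral_of_preservesRAP hN hψ.1)
    (hD.hasDerivAt_integral_of_preservesRAP hN hφ.1) (fun t => ?_) t
  rw [← dist_eq_norm]
  exact ((hlip t).dist_le_mul _ (mem_closedBall_iff_norm.2 (hψ.2 t)) _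
    (mem_closedBall_iff_norm.2 (hφ.2 t))).trans (by gcongr; exact hC t)

theorem existsUnique_rap_solution (hD : HasExpDichotomy A Φ P α K)
    (hG : HasRAPIntegral (greenOperator Φ P)) {b : ℝ → E} (hb : RAP b) (hξ : RAP ξ)
    (hξ' : ∀ t, HasDerivAt ξ (A t (ξ t) + b t) t) (hN : PreservesRAP N)
    (hlip : ∀ t, LipschitzOnWith q (N t) (closedBall (ξ t) r)) (hr : 0 ≤ r)
    (hq : 2 * K / α * q < 1) {e : ℝ} (he : ∀ t, ‖N t (ξ t) - b t‖ ≤ e)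
    (hqe : 2 * K / α * (q * r + e) ≤ r) :
    ∃! ψ, IsRAPSolutionNear (fun t x => A t x + N t x) ξ r ψ := by
  have hθ : 0 ≤ 2 * K / α * q := by have := hD.const_nonneg; have := hD.rate_pos; positivity
  simp only [hD.isRAPSolutionNear_iff hN]
  refine existsUnique_mem_fixedPoint (θ := ⟨_, hθ⟩) (fun ψ hψ => hψ.1.uniformContinuous.continuous)
    (fun ψ hψ => ?_) isClosed_setOf_mem_rapTube ⟨ξ, hξ, fun t => by simpa using hr⟩
    (hD.mapsTo_rapTube hG hb hξ hξ' hN hlip hr he hqe) hq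
    fun ψ hψ φ hφ C => hD.dist_integral_le hG hN hlip hψ hφ
  obtain ⟨C, hC⟩ := hψ.1.exists_bound
  exact ⟨C + C, fun t s => dist_le_norm_add_norm _ _ |>.trans (add_le_add (hC t) (hC s))⟩

theorem eventually_existsUnique_rap_solution (hD : HasExpDichotomy A Φ P α K)
    (hG : HasRAPIntegral (greenOperator Φ P)) {f : ℝ → E → E} (hξ : RAP ξ)
    (hξ' : ∀ t, HasDerivAt ξ (A t (ξ t) + f t (ξ t)) t) (hf : PreservesRAP f)
    (hr : 0 < r) (hflip : ∀ t, LipschitzOnWith q (f t) (closedBall (ξ t) r))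
    (hq : 2 * K / α * q < 1) {ι : Type*} {l : Filter ι} {h : ι → ℝ → E → E}
    (hh : ∀ᶠ i in l, PreservesRAP (h i))
    (hhlip : ∀ ε : ℝ≥0, 0 < ε → ∀ᶠ i in l, ∀ t, LipschitzOnWith ε (h i t) (closedBall (ξ t) r))
    (hhsmall : ∀ ε > 0, ∀ᶠ i in l, ∀ t, ‖h i t (ξ t)‖ ≤ ε) :
    ∀ᶠ i in l, ∃! ψ, IsRAPSolutionNear (fun t x => A t x + (f t x + h i t x)) ξ r ψ := by
  obtain ⟨ε, hε, hqε, hself⟩ : ∃ ε : ℝ≥0, 0 < ε ∧ 2 * K / α * (q + ε : ℝ≥0) < 1 ∧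
      2 * K / α * ((q + ε : ℝ≥0) * r + ε) < r := by
    have hcontr : ∀ᶠ ε : ℝ≥0 in 𝓝 0, 2 * K / α * (q + ε : ℝ≥0) < 1 :=
      Continuous.tendsto' (by fun_prop) 0 _ (by simp) |>.eventually_lt_const hq
    have hself : ∀ᶠ ε : ℝ≥0 in 𝓝 0, 2 * K / α * ((q + ε : ℝ≥0) * r + ε) < r :=
      Continuous.tendsto' (by fun_prop) 0 (2 * K / α * q * r) (by simp [mul_assoc])
        |>.eventually_lt_const (by simpa using mul_lt_mul_of_pos_right hq hr)
    have hpos : ∀ᶠ ε : ℝ≥0 in 𝓝[>] 0, 0 < ε := self_mem_nhdsWithin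
    exact (hpos.and ((hcontr.and hself).filter_mono nhdsWithin_le_nhds)).exists
  filter_upwards [hh, hhlip ε hε, hhsmall ε hε] with i hi hilip hismall
  exact hD.existsUnique_rap_solution hG (hf ξ hξ) hξ hξ' (hf.add hi)
    (fun t => (hflip t).add (hilip t)) hr.le hqε (fun t => by simpa using hismall t) hself.le

end HasExpDichotomy

end Semilinear

section Perturbation

lemma eventually_nhdsGE_iff {a : ℝ} {p : ℝ → Prop} :
    (∀ᶠ ν in 𝓝[≥] a, p ν) ↔ p a ∧ ∀ᶠ ν in 𝓝[>] a, p ν := by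
  rw [← Set.Ioi_insert, nhdsWithin_insert, eventually_sup, eventually_pure]

variable {E : Type*} [NormedAddCommGroup E]

lemma lipschitzOnWith_closedBall_zero {f : E → E} {M R : ℝ}
    (hf : ∀ x y, ‖x‖ ≤ R → ‖y‖ ≤ R → ‖f x - f y‖ ≤ M * ‖x - y‖) :
    LipschitzOnWith M.toNNReal f (closedBall 0 R) :=
  .of_dist_le' fun x hx y hy => by
    simpa only [dist_eq_norm] using
      hf x y (mem_closedBall_zero_iff.1 hx) (mem_closedBall_zero_iff.1 hy)

variable [NormedSpace ℝ E]

/-- The difference of the right-hand sides `A ν t x + f t x + g t x ν` and `A 0 t x + f t x`. -/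
def perturbation (A : ℝ → ℝ → E →L[ℝ] E) (g : ℝ → E → ℝ → E) (ν t : ℝ) (x : E) : E :=
  (A ν t - A 0 t) x + g t x ν

variable {A : ℝ → ℝ → E →L[ℝ] E} {g : ℝ → E → ℝ → E} {νbar R : ℝ} {GN M₁ : ℝ → ℝ}

lemma add_perturbation (f : ℝ → E → E) (ν t : ℝ) (x : E) :
    A 0 t x + (f t x + perturbation A g ν t x) = A ν t x + f t x + g t x ν := by
  simp only [perturbation, sub_apply]
  abel

lemma perturbation_zero (hg0 : ∀ t x, g t x 0 = 0) (t : ℝ) (x : E) :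
    perturbation A g 0 t x = 0 := by
  simp [perturbation, hg0]

lemma preservesRAP_perturbation {ν : ℝ} (hA : RAP (A ν)) (hA₀ : RAP (A 0))
    (hg : ∀ S : Set (E × ℝ), Bornology.IsBounded S → RAPUniform (fun t p => g t p.1 p.2) S) :
    PreservesRAP (perturbation A g ν) := fun ψ hψ => by
  obtain ⟨R, hR⟩ := hψ.exists_bound
  exact ((hA.sub hA₀).clm_apply hψ).add <|
    (hg (closedBall 0 R ×ˢ {ν}) (isBounded_closedBall.prod Bornology.isBounded_singleton)).comp
      (hψ.prodMk (rap_const ν)) fun t => ⟨mem_closedBall_zero_iff.2 (hR t), rfl⟩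

lemma eventually_norm_perturbation_le (hνbar : 0 < νbar)
    (hA : ∀ ε > 0, ∀ᶠ ν in 𝓝[>] 0, ∀ t, ‖A ν t - A 0 t‖ ≤ ε) (hg0 : ∀ t x, g t x 0 = 0)
    (hg : ∀ ν ∈ Set.Icc 0 νbar, ∀ t x, ‖x‖ ≤ R → ‖g t x ν‖ ≤ GN ν)
    (hGN : Tendsto GN (𝓝[>] 0) (𝓝 0)) (hR : 0 < R) {ε : ℝ} (hε : 0 < ε) :
    ∀ᶠ ν in 𝓝[≥] 0, ∀ t x, ‖x‖ ≤ R → ‖perturbation A g ν t x‖ ≤ ε := by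
  refine eventually_nhdsGE_iff.2 ⟨fun t x _ => by simpa [perturbation_zero hg0] using hε.le, ?_⟩
  filter_upwards [hA (ε / 2 / R) (by positivity), hGN.eventually_le_const (half_pos hε),
    Ioc_mem_nhdsGT hνbar] with ν hAν hGNν hν t x hx
  calc ‖perturbation A g ν t x‖ ≤ ‖(A ν t - A 0 t) x‖ + ‖g t x ν‖ := norm_add_le _ _
    _ ≤ ε / 2 / R * R + ε / 2 := add_le_add
        ((A ν t - A 0 t).le_of_opNorm_le_of_le (hAν t) hx)
        ((hg ν (Set.Ioc_subset_Icc_self hν) t x hx).trans hGNν)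
    _ = ε := by rw [div_mul_cancel₀ _ hR.ne', add_halves]

lemma eventually_lipschitzOnWith_perturbation (hνbar : 0 < νbar)
    (hA : ∀ ε > 0, ∀ᶠ ν in 𝓝[>] 0, ∀ t, ‖A ν t - A 0 t‖ ≤ ε) (hg0 : ∀ t x, g t x 0 = 0)
    (hg : ∀ ν ∈ Set.Icc 0 νbar, ∀ t x y, ‖x‖ ≤ R → ‖y‖ ≤ R →
      ‖g t x ν - g t y ν‖ ≤ M₁ ν * ‖x - y‖)
    (hM₁ : Tendsto M₁ (𝓝[>] 0) (𝓝 0)) {ε : ℝ≥0} (hε : 0 < ε) :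
    ∀ᶠ ν in 𝓝[≥] 0, ∀ t, LipschitzOnWith ε (perturbation A g ν t) (closedBall 0 R) := by
  refine eventually_nhdsGE_iff.2 ⟨fun t => ?_, ?_⟩
  · simpa only [funext (perturbation_zero hg0 t)] using (LipschitzWith.const' 0).lipschitzOnWith
  filter_upwards [hA (ε / 2) (by positivity),
    hM₁.eventually_le_const (NNReal.coe_pos.2 (half_pos hε)), Ioc_mem_nhdsGT hνbar]
    with ν hAν hM₁ν hν t
  have hlin : LipschitzWith (ε / 2) (A ν t - A 0 t) :=
    (A ν t - A 0 t).lipschitz.weaken (hAν t)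
  have hnonlin : LipschitzOnWith (ε / 2) (g t · ν) (closedBall 0 R) :=
    (lipschitzOnWith_closedBall_zero (hg ν (Set.Ioc_subset_Icc_self hν) t)).weaken
      (Real.toNNReal_le_iff_le_coe.2 hM₁ν)
  rw [← add_halves ε]
  exact hlin.lipschitzOnWith.add hnonlin

theorem exists_unique_RAP_solution_perturbed_matrix_family_general [CompleteSpace E]
    {Φ : ℝ → (E →L[ℝ] E)ˣ} {P : E →L[ℝ] E} {α K : ℝ} {f : ℝ → E → E} {ξ : ℝ → E} {M : ℝ → ℝ}
    {M₁ GN : ℝ → ℝ → ℝ} (hνbar : 0 < νbar) (hARAP : ∀ ν ∈ Set.Icc 0 νbar, RAP (A ν))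
    (hD : HasExpDichotomy (A 0) Φ P α K) (hGreen : HasRAPIntegral (greenOperator Φ P))
    (hAconv : ∀ ε > 0, ∀ᶠ ν in 𝓝[>] 0, ∀ t, ‖A ν t - A 0 t‖ ≤ ε)
    (hfRAP : ∀ R, RAPUniform f (closedBall 0 R)) (hM : ∀ R > 0, 2 * K * M R < α)
    (hflip : ∀ R > 0, ∀ t x y, ‖x‖ ≤ R → ‖y‖ ≤ R → ‖f t x - f t y‖ ≤ M R * ‖x - y‖)
    (hξ : RAP ξ) (hξ' : ∀ t, HasDerivAt ξ (A 0 t (ξ t) + f t (ξ t)) t)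
    (hgRAP : ∀ S : Set (E × ℝ), Bornology.IsBounded S → RAPUniform (fun t p => g t p.1 p.2) S)
    (hg0 : ∀ t x, g t x 0 = 0)
    (hgGN : ∀ R > 0, ∀ ν ∈ Set.Icc 0 νbar, ∀ t x, ‖x‖ ≤ R → ‖g t x ν‖ ≤ GN R ν)
    (hglip : ∀ R > 0, ∀ ν ∈ Set.Icc 0 νbar, ∀ t x y, ‖x‖ ≤ R → ‖y‖ ≤ R →
      ‖g t x ν - g t y ν‖ ≤ M₁ R ν * ‖x - y‖)
    (hGN0 : ∀ R > 0, Tendsto (GN R) (𝓝[>] 0) (𝓝 0))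
    (hM₁0 : ∀ R > 0, Tendsto (M₁ R) (𝓝[>] 0) (𝓝 0)) {r : ℝ} (hr : 0 < r) :
    ∃ ν₀ > 0, ν₀ ≤ νbar ∧
      (∀ ν ∈ Set.Icc 0 ν₀,
        ∃! ψ, IsRAPSolutionNear (fun t x => A ν t x + f t x + g t x ν) ξ r ψ) ∧
      ∀ ψ : ℝ → ℝ → E, (∀ ν ∈ Set.Icc 0 ν₀,
          IsRAPSolutionNear (fun t x => A ν t x + f t x + g t x ν) ξ r (ψ ν)) →
        TendstoUniformly ψ ξ (𝓝[>] 0) := by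
  obtain ⟨C, hC⟩ := hξ.exists_bound
  have hC0 : 0 ≤ C := (norm_nonneg _).trans (hC 0)
  have hexists : ∀ ρ > 0, ∀ᶠ ν in 𝓝[≥] 0,
      ∃! ψ, IsRAPSolutionNear (fun t x => A ν t x + f t x + g t x ν) ξ ρ ψ := fun ρ hρ => by
    have hR : 0 < ρ + C := by positivity
    have htube : ∀ t, closedBall (ξ t) ρ ⊆ closedBall 0 (ρ + C) := fun t =>
      closedBall_subset_closedBall' (by simpa using hC t)
    have hcontr : 2 * K / α * (M (ρ + C)).toNNReal < 1 := by
      have := hD.rate_pos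
      rcases le_total (M (ρ + C)) 0 with h | h
      · simp [Real.toNNReal_of_nonpos h]
      · rw [Real.coe_toNNReal _ h, div_mul_eq_mul_div, div_lt_one this]
        exact hM _ hR
    have hpert : ∀ᶠ ν in 𝓝[≥] 0, PreservesRAP (perturbation A g ν) := by
      filter_upwards [Icc_mem_nhdsGE hνbar] with ν hν using
        preservesRAP_perturbation (hARAP ν hν) (hARAP 0 ⟨le_rfl, hνbar.le⟩) hgRAP
    simpa only [add_perturbation] using hD.eventually_existsUnique_rap_solution hGreen hξ hξ'
      (preservesRAP_of_rapUniform hfRAP) hρ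
      (fun t => (lipschitzOnWith_closedBall_zero (hflip _ hR t)).mono (htube t)) hcontr hpert
      (fun ε hε => (eventually_lipschitzOnWith_perturbation hνbar hAconv hg0 (hglip _ hR)
        (hM₁0 _ hR) hε).mono fun ν hν t => (hν t).mono (htube t))
      fun ε hε => (eventually_norm_perturbation_le hνbar hAconv hg0 (hgGN _ hR) (hGN0 _ hR) hR
        hε).mono fun ν hν t => hν t _ ((hC t).trans (by linarith))
  obtain ⟨ν₁, hν₁, hν₁ex⟩ := mem_nhdsGE_iff_exists_Icc_subset.1 (hexists r hr)
  refine ⟨min ν₁ νbar, lt_min hν₁ hνbar, min_le_right _ _,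
    fun ν hν => hν₁ex ⟨hν.1, hν.2.trans (min_le_left _ _)⟩, fun ψ hψ => ?_⟩
  refine tendstoUniformly_of_existsUnique hr
    (fun ρ hρ => (eventually_nhdsGE_iff.1 (hexists ρ hρ)).2) ?_
  filter_upwards [Ioc_mem_nhdsGT (lt_min hν₁ hνbar)] with ν hν
    using hψ ν (Set.Ioc_subset_Icc_self hν)

end Perturbation

section Matrices

variable {n : ℕ} {A : ℝ → Matrix (Fin n) (Fin n) ℝ} {U : ℝ → (Matrix (Fin n) (Fin n) ℝ)ˣ}
  {P : Matrix (Fin n) (Fin n) ℝ}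

lemma toEuclideanCLM_eq_sum (B : Matrix (Fin n) (Fin n) ℝ) :
    Matrix.toEuclideanCLM (𝕜 := ℝ) B =
      ∑ i, ∑ j, B i j • Matrix.toEuclideanCLM (𝕜 := ℝ) (Matrix.single i j 1) := by
  conv_lhs => rw [Matrix.matrix_eq_sum_single B]
  simp only [map_sum, ← map_smul, Matrix.smul_single, smul_eq_mul, mul_one]

lemma RAPMatrix.rap_toEuclideanCLM (hA : RAPMatrix A) :
    RAP fun t => Matrix.toEuclideanCLM (𝕜 := ℝ) (A t) := by
  simp only [toEuclideanCLM_eq_sum (A _)]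
  exact rap_sum _ fun i _ => rap_sum _ fun j _ => (hA i j).smul_const _

lemma hasDerivAt_toEuclideanCLM {B : Matrix (Fin n) (Fin n) ℝ} {t : ℝ}
    (hA : ∀ i j, HasDerivAt (fun t => A t i j) (B i j) t) :
    HasDerivAt (fun t => Matrix.toEuclideanCLM (𝕜 := ℝ) (A t))
      (Matrix.toEuclideanCLM (𝕜 := ℝ) B) t := by
  simp only [toEuclideanCLM_eq_sum (A _)]
  rw [toEuclideanCLM_eq_sum B]
  exact HasDerivAt.fun_sum fun i _ => HasDerivAt.fun_sum fun j _ =>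
    (hA i j).smul_const (Matrix.toEuclideanCLM (𝕜 := ℝ) (Matrix.single i j 1))

/-- The invertible operator on Euclidean space defined by an invertible matrix. -/
noncomputable def unitsToEuclideanCLM (u : (Matrix (Fin n) (Fin n) ℝ)ˣ) :
    (EuclideanSpace ℝ (Fin n) →L[ℝ] EuclideanSpace ℝ (Fin n))ˣ :=
  Units.map (Matrix.toEuclideanCLM (n := Fin n) (𝕜 := ℝ) : _ →* _) u

lemma toEuclideanCLM_conj (u v : (Matrix (Fin n) (Fin n) ℝ)ˣ) (Q : Matrix (Fin n) (Fin n) ℝ) :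
    Matrix.toEuclideanCLM (𝕜 := ℝ) (u.val * Q * v.val⁻¹) =
      (unitsToEuclideanCLM u).val * Matrix.toEuclideanCLM (𝕜 := ℝ) Q *
        ↑(unitsToEuclideanCLM v)⁻¹ := by
  rw [map_mul, map_mul, ← Matrix.coe_units_inv]
  rfl

lemma ExpDichotomy.hasExpDichotomy {α K : ℝ} (hα : 0 < α)
    (hU : IsFundamentalMatrix A fun t => (U t).val)
    (h : ExpDichotomy (fun t => (U t).val) α K P) :
    HasExpDichotomy (fun t => Matrix.toEuclideanCLM (𝕜 := ℝ) (A t))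
      (fun t => unitsToEuclideanCLM (U t)) (Matrix.toEuclideanCLM (𝕜 := ℝ) P) α K where
  rate_pos := hα
  isIdempotentElem := IsIdempotentElem.map h.1 _
  hasDerivAt t := (hasDerivAt_toEuclideanCLM (hU.2.2 t)).congr_deriv (map_mul _ _ _)
  norm_stable_le hst := by
    rw [← toEuclideanCLM_conj]
    exact h.2.1 _ _ hst
  norm_unstable_le hts := by
    rw [← map_one (Matrix.toEuclideanCLM (n := Fin n) (𝕜 := ℝ)), ← map_sub, ← toEuclideanCLM_conj]
    exact h.2.2 _ _ hts

lemma opNorm_eq_norm_toEuclideanCLM (B : Matrix (Fin n) (Fin n) ℝ) :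
    opNorm B = ‖Matrix.toEuclideanCLM (𝕜 := ℝ) B‖ := rfl

lemma mulVecE_eq_toEuclideanCLM (B : Matrix (Fin n) (Fin n) ℝ) (v : EuclideanSpace ℝ (Fin n)) :
    mulVecE B v = Matrix.toEuclideanCLM (𝕜 := ℝ) B v := rfl

lemma toEuclideanCLM_greenKernel (t s : ℝ) :
    Matrix.toEuclideanCLM (𝕜 := ℝ) (GreenKernel (fun t => (U t).val) P t s) =
      greenOperator (fun t => unitsToEuclideanCLM (U t)) (Matrix.toEuclideanCLM (𝕜 := ℝ) P)
        t s := by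
  rw [GreenKernel, greenOperator, apply_ite (Matrix.toEuclideanCLM (n := Fin n) (𝕜 := ℝ)), map_neg,
    toEuclideanCLM_conj, toEuclideanCLM_conj, map_sub, map_one]

lemma RAPIntegralProperty.hasRAPIntegral
    (hG : RAPIntegralProperty (GreenKernel (fun t => (U t).val) P)) :
    HasRAPIntegral (greenOperator (fun t => unitsToEuclideanCLM (U t))
      (Matrix.toEuclideanCLM (𝕜 := ℝ) P)) := fun h hh => by
  simpa only [mulVecE_eq_toEuclideanCLM, toEuclideanCLM_greenKernel] using hG h hh

end Matrices

/-- Corollary: RAP solutions of `x' = A_ν(t)x + f(t,x) + g_ν(t,x)`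
under (H1') and (H2)-(H4), with convergence to `ξ` as `ν → 0⁺`. -/
theorem exists_unique_RAP_solution_perturbed_matrix_family {n : ℕ}
    (A : ℝ → ℝ → Matrix (Fin n) (Fin n) ℝ)  -- `A ν t`
    (Φ : ℝ → Matrix (Fin n) (Fin n) ℝ)
    (P : Matrix (Fin n) (Fin n) ℝ) (α K : ℝ)
    (f : ℝ → EuclideanSpace ℝ (Fin n) → EuclideanSpace ℝ (Fin n))
    (ξ : ℝ → EuclideanSpace ℝ (Fin n))
    (g : ℝ → EuclideanSpace ℝ (Fin n) → ℝ → EuclideanSpace ℝ (Fin n))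
    (νbar : ℝ) (M : ℝ → ℝ) (M₁ GN : ℝ → ℝ → ℝ)
    (hα : 0 < α) (hK : 1 ≤ K) (hνbar : 0 < νbar)
    -- (H1')
    (hARAP : ∀ ν ∈ Set.Icc (0:ℝ) νbar, RAPMatrix (A ν))
    (hΦ : IsFundamentalMatrix (A 0) Φ)
    (hdich : ExpDichotomy Φ α K P)
    (hGreen : RAPIntegralProperty (GreenKernel Φ P))
    (hAconv : ∀ ε > 0, ∀ᶠ ν in nhdsWithin 0 (Set.Ioi 0), ∀ t : ℝ,
      opNorm (A ν t - A 0 t) ≤ ε)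
    -- (H2)
    (hfRAP : ∀ S : Set (EuclideanSpace ℝ (Fin n)), IsCompact S → RAPUniform f S)
    (hM : ∀ r > 0, M r < α / (2 * K))
    (hflip : ∀ r > 0, ∀ t : ℝ, ∀ x y : EuclideanSpace ℝ (Fin n),
      ‖x‖ ≤ r → ‖y‖ ≤ r → ‖f t x - f t y‖ ≤ M r * ‖x - y‖)
    (hξRAP : RAP ξ)
    (hξsol : ∀ t, HasDerivAt ξ (mulVecE (A 0 t) (ξ t) + f t (ξ t)) t)
    (hξuniq : ∀ η : ℝ → EuclideanSpace ℝ (Fin n), RAP η →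
      (∀ t, HasDerivAt η (mulVecE (A 0 t) (η t) + f t (η t)) t) → η = ξ)
    -- (H3)
    (hfC2 : ∀ t, ContDiff ℝ 2 (f t))
    (hf2lip : ∀ r > 0, ∃ L, ∀ t : ℝ, ∀ x y : EuclideanSpace ℝ (Fin n),
      ‖x‖ ≤ r → ‖y‖ ≤ r →
      ‖fderiv ℝ (fderiv ℝ (f t)) x - fderiv ℝ (fderiv ℝ (f t)) y‖ ≤ L * ‖x - y‖)
    (hDfRAP : RAP (fun t => fderiv ℝ (f t) (ξ t)))
    (hDfbdd : BddAbove (Set.range fun t => ‖fderiv ℝ (f t) (ξ t)‖))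
    (δ : ℝ) (hδdef : δ = ⨆ t, ‖fderiv ℝ (f t) (ξ t)‖)
    (hδ : δ < α / (4 * K ^ 2))
    (hvarGreen : ∃ (Ψ : ℝ → Matrix (Fin n) (Fin n) ℝ)
        (Q : Matrix (Fin n) (Fin n) ℝ) (β L : ℝ),
      IsFundamentalMatrix (fun t => A 0 t + clmToMatrix (fderiv ℝ (f t) (ξ t))) Ψ ∧
      ExpDichotomy Ψ β L Q ∧ RAPIntegralProperty (GreenKernel Ψ Q))
    -- (H4)
    (hgRAP : ∀ S : Set (EuclideanSpace ℝ (Fin n) × ℝ), Bornology.IsBounded S →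
      RAPUniform (fun t p => g t p.1 p.2) S)
    (hg0 : ∀ t x, g t x 0 = 0)
    (hgbdd : ∀ ν ∈ Set.Icc (0:ℝ) νbar, ∀ r > 0, ∃ C, ∀ t : ℝ,
      ∀ x : EuclideanSpace ℝ (Fin n), ‖x‖ ≤ r → ‖g t x ν‖ ≤ C)
    (hgGN : ∀ r > 0, ∀ ν ∈ Set.Icc (0:ℝ) νbar, ∀ t : ℝ,
      ∀ x : EuclideanSpace ℝ (Fin n), ‖x‖ ≤ r → ‖g t x ν‖ ≤ GN r ν)
    (hglip : ∀ r > 0, ∀ ν ∈ Set.Icc (0:ℝ) νbar, ∀ t : ℝ,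
      ∀ x y : EuclideanSpace ℝ (Fin n), ‖x‖ ≤ r → ‖y‖ ≤ r →
      ‖g t x ν - g t y ν‖ ≤ M₁ r ν * ‖x - y‖)
    (hGN0 : ∀ r > 0, Filter.Tendsto (GN r) (nhdsWithin 0 (Set.Ioi 0)) (nhds 0))
    (hM₁0 : ∀ r > 0, Filter.Tendsto (M₁ r) (nhdsWithin 0 (Set.Ioi 0)) (nhds 0)) :
    ∃ r > 0, ∃ ν₀ > 0, ν₀ ≤ νbar ∧
      (∀ ν ∈ Set.Icc (0:ℝ) ν₀,
        ∃! ψ : ℝ → EuclideanSpace ℝ (Fin n),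
          RAP ψ ∧
          (∀ t, HasDerivAt ψ (mulVecE (A ν t) (ψ t) + f t (ψ t) + g t (ψ t) ν) t) ∧
          ∀ t, ‖ψ t - ξ t‖ ≤ r) ∧
      (UniformContinuousOn
          (fun p : ℝ × EuclideanSpace ℝ (Fin n) × ℝ => g p.1 p.2.1 p.2.2)
          (Set.univ ×ˢ Metric.closedBall 0 (r + ⨆ t, ‖ξ t‖) ×ˢ Set.Icc 0 ν₀) →
        ∀ ψ : ℝ → ℝ → EuclideanSpace ℝ (Fin n),
          (∀ ν ∈ Set.Icc (0:ℝ) ν₀, RAP (ψ ν) ∧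
            (∀ t, HasDerivAt (ψ ν)
              (mulVecE (A ν t) (ψ ν t) + f t (ψ ν t) + g t (ψ ν t) ν) t) ∧
            ∀ t, ‖ψ ν t - ξ t‖ ≤ r) →
          ∀ t, Filter.Tendsto (fun ν => ψ ν t)
            (nhdsWithin 0 (Set.Ioc 0 ν₀)) (nhds (ξ t))) := by
  obtain ⟨U, rfl⟩ : ∃ U : ℝ → (Matrix (Fin n) (Fin n) ℝ)ˣ, Φ = fun t => (U t).val :=
    ⟨fun t => (hΦ.2.1 t).unit, rfl⟩
  obtain ⟨ν₀, hν₀, hν₀νbar, hexists, hconv⟩ :=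
    exists_unique_RAP_solution_perturbed_matrix_family_general
      (A := fun ν t => Matrix.toEuclideanCLM (𝕜 := ℝ) (A ν t)) hνbar
      (fun ν hν => (hARAP ν hν).rap_toEuclideanCLM) (hdich.hasExpDichotomy hα hΦ)
      hGreen.hasRAPIntegral (by simpa only [opNorm_eq_norm_toEuclideanCLM, map_sub] using hAconv)
      (fun R => hfRAP _ (isCompact_closedBall 0 R))
      (fun R hR => (lt_div_iff₀' (by positivity)).1 (hM R hR)) hflip hξRAP hξsol hgRAP hg0 hgGN
      hglip hGN0 hM₁0 one_pos
  exact ⟨1, one_pos, ν₀, hν₀, hν₀νbar, hexists, fun _ ψ hψ t =>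
    ((hconv ψ hψ).tendsto_at t).mono_left (nhdsWithin_mono _ Set.Ioc_subset_Ioi_self)⟩
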